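/- Nash-Williams–Tutte theorem: a finite graph G = (V,E) contains M pairwise edge-disjoint spanning trees if and only if for every partition {V₁,…,V_r} of V into r ≥ 2 nonempty blocks, the number of edges of G with endpoints in two different blocks is at least M(r−1). -/

import Mathlib

open SimpleGraph

/-!
Deleting `k` edges from a graph with `c` components leaves at most `c + k` components. So, for
edge-disjoint subgraphs `T i` of `G`, `i < M`, with `c i` components, `M * r ≤ k + ∑ i, c i`, where
`r` is the number of blocks of a partition and `k` the number of edges of `G` between different
blocks. Spanning trees have `c i = 1`, which gives one implication.

For the converse, choose edge-disjoint forests `F i ≤ G` with as many edges as possible in total. If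
`G` has an edge `xy` outside all of them, then `x` and `y` are joined by a path in each `F i`, and
trading an edge of this path for `xy` yields another maximum packing. Let `U` be the graph of all
edges left uncovered after some sequence of such trades. Tracing the trades back shows that every
`F i ∩ U` has the same components as `U`. Hence the partition into components of `U` attains
equality above: an edge of `G` between two blocks lies in some `F i`, and `F i ∩ U` has exactly one
component per block. The hypothesis applied to this partition forces `∑ i, c i ≤ M`, so each `F i`
is connected.
-/

section

open scoped Function

variable {V ι : Type*}

section Forests

lemma reachableSetoid_le {H : SimpleGraph V} {r : Setoid V} (h : ∀ u v, H.Adj u v → r u v) :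
    H.reachableSetoid ≤ r := by
  rintro u v ⟨p⟩
  induction p with
  | nil => exact r.refl _
  | cons hadj _ ih => exact r.trans (h _ _ hadj) ih

lemma not_reachable_deleteEdges_of_mem_edges {F : SimpleGraph V} (hF : F.IsAcyclic) {x y : V}
    {p : F.Walk x y} (hp : p.IsPath) {e : Sym2 V} (he : e ∈ p.edges) :
    ¬ (F.deleteEdges {e}).Reachable x y := by
  classical
  induction e with | h a b
  rw [reachable_deleteEdges_iff_exists_walk]
  rintro ⟨q, hq⟩
  have hpq : p = q.bypass := congrArg Subtype.val ((hF.subsingleton_path x y).elim ⟨p, hp⟩ q.toPath)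
  exact hq (q.edges_bypass_subset_edges (hpq ▸ he))

lemma edgeSet_eq_iUnion_edgeSet_toSubgraph (G : SimpleGraph V) :
    G.edgeSet = ⋃ c : G.ConnectedComponent, c.toSubgraph.edgeSet := by
  ext e
  induction e with | h u v
  simpa [ConnectedComponent.toSubgraph] using fun h : G.Adj u v ↦ h.reachable.symm

lemma pairwise_disjoint_edgeSet_toSubgraph (G : SimpleGraph V) :
    Pairwise (Disjoint on fun c : G.ConnectedComponent ↦ c.toSubgraph.edgeSet) := by
  refine fun c d hcd ↦ Set.disjoint_left.2 fun e hc hd ↦ ?_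
  induction e with | h u v
  exact Set.disjoint_left.1 (pairwise_disjoint_supp_connectedComponent G hcd)
    (c.toSubgraph.edge_vert hc) (d.toSubgraph.edge_vert hd)

lemma ncard_edgeSet_add_card_connectedComponent [Finite V] {F : SimpleGraph V}
    (hF : F.IsAcyclic) : F.edgeSet.ncard + Nat.card F.ConnectedComponent = Nat.card V := by
  classical
  have := Fintype.ofFinite F.ConnectedComponent
  have hcomponent (c : F.ConnectedComponent) : c.toSubgraph.edgeSet.ncard + 1 = c.supp.ncard := by
    rw [← c.toSubgraph.image_coe_edgeSet_coe,
      Set.ncard_image_of_injective _ (Sym2.map.injective Subtype.val_injective),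
      c.coe_toSubgraph, ← Nat.card_coe_set_eq]
    exact (isTree_iff_connected_and_card.1 (hF.isTree_connectedComponent c)).2
  calc F.edgeSet.ncard + Nat.card F.ConnectedComponent
      = ∑ c : F.ConnectedComponent, (c.toSubgraph.edgeSet.ncard + 1) := by
        rw [edgeSet_eq_iUnion_edgeSet_toSubgraph, Set.ncard_iUnion_of_finite
          (fun _ ↦ Set.toFinite _) (pairwise_disjoint_edgeSet_toSubgraph F),
          finsum_eq_sum_of_fintype, Finset.sum_add_distrib]
        simp
    _ = ∑ c : F.ConnectedComponent, c.supp.ncard := by simp only [hcomponent]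
    _ = Nat.card V := by
        rw [← Set.ncard_univ, ← iUnion_connectedComponentSupp F, Set.ncard_iUnion_of_finite
          (fun _ ↦ Set.toFinite _) (pairwise_disjoint_supp_connectedComponent F),
          finsum_eq_sum_of_fintype]

lemma isTree_of_card_connectedComponent_le_one [Finite V] [Nonempty V] {F : SimpleGraph V}
    (hF : F.IsAcyclic) (h : Nat.card F.ConnectedComponent ≤ 1) : F.IsTree := by
  have := Finite.card_le_one_iff_subsingleton.1 h
  exact ⟨⟨fun _ _ ↦ ConnectedComponent.exact (Subsingleton.elim _ _)⟩, hF⟩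

lemma card_connectedComponent_eq_one {T : SimpleGraph V} (hT : T.Connected) :
    Nat.card T.ConnectedComponent = 1 := by
  have := hT.nonempty
  have := hT.preconnected.subsingleton_connectedComponent
  exact Nat.card_unique

lemma sum_ncard_edgeSet_le [Finite V] [Fintype ι] {G : SimpleGraph V} {H : ι → SimpleGraph V}
    (hle : ∀ i, H i ≤ G) (hdisj : Pairwise (Disjoint on H)) :
    ∑ i, (H i).edgeSet.ncard ≤ G.edgeSet.ncard := by
  rw [← finsum_eq_sum_of_fintype, ← Set.ncard_iUnion_of_finite (fun _ ↦ Set.toFinite _)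
    fun i j hij ↦ disjoint_edgeSet.2 (hdisj hij)]
  exact Set.ncard_le_ncard (Set.iUnion_subset fun i ↦ edgeSet_mono (hle i)) (Set.toFinite _)

end Forests

section Crossing

variable [Fintype V] [DecidableEq V]

/-- The subgraph of `G` formed by the edges whose endpoints lie in different blocks of `P`. -/
def crossingGraph (G : SimpleGraph V) (P : Finpartition (Finset.univ : Finset V)) :
    SimpleGraph V :=
  G ⊓ (⊤ : SimpleGraph (Finset V)).comap P.part

variable {F G H : SimpleGraph V} {P : Finpartition (Finset.univ : Finset V)}

lemma crossingGraph_adj {u v : V} :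
    (crossingGraph G P).Adj u v ↔ G.Adj u v ∧ P.part u ≠ P.part v :=
  Iff.rfl

lemma crossingGraph_le : crossingGraph G P ≤ G :=
  inf_le_left

lemma crossingGraph_mono (h : F ≤ G) : crossingGraph F P ≤ crossingGraph G P :=
  inf_le_inf_right _ h

lemma exists_mem_parts_iff_part_eq {u v : V} :
    (∃ p ∈ P.parts, ∀ w ∈ s(u, v), w ∈ p) ↔ P.part u = P.part v := by
  rw [← P.mem_part_iff_part_eq_part (Finset.mem_univ u) (Finset.mem_univ v), P.mem_part_iff_exists]
  simp

lemma edgeSet_crossingGraph (G : SimpleGraph V) (P : Finpartition (Finset.univ : Finset V)) :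
    (crossingGraph G P).edgeSet = {e | e ∈ G.edgeSet ∧ ¬∃ p ∈ P.parts, ∀ v ∈ e, v ∈ p} := by
  ext e
  induction e with | h u v
  exact and_congr_right fun _ ↦ not_congr exists_mem_parts_iff_part_eq.symm

lemma card_parts_le_card_connectedComponent (h : ∀ u v, H.Adj u v → P.part u = P.part v) :
    P.parts.card ≤ Nat.card H.ConnectedComponent := by
  let block : H.ConnectedComponent → Finset V :=
    Quot.lift P.part fun _ _ huv ↦ reachableSetoid_le (r := Setoid.ker P.part) h huv
  have hsurj : (P.parts : Set (Finset V)) ⊆ Set.range block := by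
    intro p hp
    obtain ⟨v, -, hv⟩ := P.part_surjOn hp
    exact ⟨H.connectedComponentMk v, hv⟩
  calc P.parts.card = (P.parts : Set (Finset V)).ncard := (Set.ncard_coe_finset _).symm
    _ ≤ (Set.range block).ncard := Set.ncard_le_ncard hsurj (Set.toFinite _)
    _ ≤ Nat.card H.ConnectedComponent := Finite.card_range_le block

lemma card_connectedComponent_le_card_parts (h : ∀ u v, P.part u = P.part v → H.Reachable u v) :
    Nat.card H.ConnectedComponent ≤ P.parts.card := by
  let component (p : P.parts) : H.ConnectedComponent :=
    H.connectedComponentMk (P.nonempty_of_mem_parts p.2).choose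
  have hsurj : component.Surjective := by
    refine ConnectedComponent.ind fun v ↦ ?_
    have hv : P.part v ∈ P.parts := P.part_mem.2 (Finset.mem_univ v)
    refine ⟨⟨_, hv⟩, ConnectedComponent.sound (h _ _ ?_)⟩
    exact P.part_eq_of_mem hv (P.nonempty_of_mem_parts hv).choose_spec
  simpa using Nat.card_le_card_of_surjective component hsurj

lemma card_parts_le_ncard_edgeSet_add_card_connectedComponent (G : SimpleGraph V)
    (P : Finpartition (Finset.univ : Finset V)) :
    P.parts.card ≤ (crossingGraph G P).edgeSet.ncard + Nat.card G.ConnectedComponent := by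
  obtain ⟨F, hFG, hF, hreach⟩ := G.exists_isAcyclic_reachable_eq_le
  have hcomponents : Nat.card F.ConnectedComponent = Nat.card G.ConnectedComponent :=
    congrArg (fun r ↦ Nat.card (Quot r)) hreach
  have hblocks : P.parts.card ≤ Nat.card (F \ crossingGraph F P).ConnectedComponent :=
    card_parts_le_card_connectedComponent fun u v h ↦ by
      rw [sdiff_adj, crossingGraph_adj] at h
      tauto
  have hinner := ncard_edgeSet_add_card_connectedComponent
    (hF.anti (sdiff_le (b := crossingGraph F P)))
  have hforest := ncard_edgeSet_add_card_connectedComponent hF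
  have hsplit := Set.ncard_sdiff_add_ncard_of_subset
    (edgeSet_mono (crossingGraph_le (G := F) (P := P))) (Set.toFinite _)
  have hcross := Set.ncard_le_ncard (edgeSet_mono (crossingGraph_mono (P := P) hFG))
    (Set.toFinite _)
  rw [← edgeSet_sdiff] at hsplit
  omega

lemma ncard_edgeSet_crossingGraph_add_card_connectedComponent_le (hF : F.IsAcyclic) (hHF : H ≤ F)
    (h : ∀ u v, P.part u = P.part v ↔ H.Reachable u v) :
    (crossingGraph F P).edgeSet.ncard + Nat.card F.ConnectedComponent ≤ P.parts.card := by
  have hdisj : Disjoint (crossingGraph F P).edgeSet H.edgeSet := by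
    rw [disjoint_edgeSet, disjoint_left]
    exact fun u v hcross hH ↦ hcross.2 ((h u v).2 hH.reachable)
  have hsub : (crossingGraph F P).edgeSet ∪ H.edgeSet ⊆ F.edgeSet :=
    Set.union_subset (edgeSet_mono crossingGraph_le) (edgeSet_mono hHF)
  have hle := Set.ncard_le_ncard hsub (Set.toFinite _)
  rw [Set.ncard_union_eq hdisj (Set.toFinite _) (Set.toFinite _)] at hle
  have hF' := ncard_edgeSet_add_card_connectedComponent hF
  have hH' := ncard_edgeSet_add_card_connectedComponent (hF.anti hHF)
  have hblocks := card_connectedComponent_le_card_parts fun u v ↦ (h u v).1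
  omega

lemma card_mul_card_parts_le [Fintype ι] {T : ι → SimpleGraph V} (hle : ∀ i, T i ≤ G)
    (hdisj : Pairwise (Disjoint on T)) (P : Finpartition (Finset.univ : Finset V)) :
    Fintype.card ι * P.parts.card ≤
      (crossingGraph G P).edgeSet.ncard + ∑ i, Nat.card (T i).ConnectedComponent := by
  calc Fintype.card ι * P.parts.card = ∑ _i : ι, P.parts.card := by simp
    _ ≤ ∑ i, ((crossingGraph (T i) P).edgeSet.ncard + Nat.card (T i).ConnectedComponent) :=
      Finset.sum_le_sum fun i _ ↦ card_parts_le_ncard_edgeSet_add_card_connectedComponent (T i) P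
    _ = ∑ i, (crossingGraph (T i) P).edgeSet.ncard + ∑ i, Nat.card (T i).ConnectedComponent :=
      Finset.sum_add_distrib
    _ ≤ _ := Nat.add_le_add_right (sum_ncard_edgeSet_le (fun i ↦ crossingGraph_mono (hle i))
      fun i j hij ↦ (hdisj hij).mono crossingGraph_le crossingGraph_le) _

end Crossing

section Packing

/-- A family of pairwise edge-disjoint forests in `G`. -/
structure IsForestPacking (G : SimpleGraph V) (F : ι → SimpleGraph V) : Prop where
  le : ∀ i, F i ≤ G
  isAcyclic : ∀ i, (F i).IsAcyclic
  disjoint : Pairwise (Disjoint on F)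

/-- A forest packing with the largest possible total number of edges. -/
structure IsMaxForestPacking [Fintype ι] (G : SimpleGraph V) (F : ι → SimpleGraph V) : Prop
    extends IsForestPacking G F where
  sum_le : ∀ F' : ι → SimpleGraph V, IsForestPacking G F' →
    ∑ i, (F' i).edgeSet.ncard ≤ ∑ i, (F i).edgeSet.ncard

lemma exists_isMaxForestPacking [Finite V] [Fintype ι] (G : SimpleGraph V) :
    ∃ F : ι → SimpleGraph V, IsMaxForestPacking G F := by
  have hne : {F : ι → SimpleGraph V | IsForestPacking G F}.Nonempty :=
    ⟨fun _ ↦ ⊥, fun _ ↦ bot_le, fun _ ↦ isAcyclic_bot, fun _ _ _ ↦ disjoint_bot_left⟩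
  obtain ⟨F, hF, hmax⟩ := Set.exists_max_image _ (fun F ↦ ∑ i, (F i).edgeSet.ncard)
    (Set.toFinite _) hne
  exact ⟨F, hF, hmax⟩

/-- The edges of `G` that belong to no member of the family `F`. -/
def uncoveredGraph (G : SimpleGraph V) (F : ι → SimpleGraph V) : SimpleGraph V :=
  G \ ⨆ i, F i

variable {G : SimpleGraph V} {F F' : ι → SimpleGraph V} {x y : V}

lemma uncoveredGraph_adj :
    (uncoveredGraph G F).Adj x y ↔ G.Adj x y ∧ ∀ i, ¬ (F i).Adj x y := by
  simp [uncoveredGraph]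

lemma IsForestPacking.update [DecidableEq ι] (hF : IsForestPacking G F)
    (hxy : (uncoveredGraph G F).Adj x y) {i : ι} {H : SimpleGraph V} (hH : H ≤ F i)
    (hr : ¬ H.Reachable x y) :
    IsForestPacking G (Function.update F i (H ⊔ edge x y)) := by
  obtain ⟨hG, huncovered⟩ := uncoveredGraph_adj.1 hxy
  have hdisj (j : ι) (hij : i ≠ j) : Disjoint (H ⊔ edge x y) (F j) :=
    disjoint_sup_left.2 ⟨(hF.disjoint hij).mono_left hH, ((disjoint_edge _).2 (huncovered j)).symm⟩
  refine ⟨?_, ?_, fun j k hjk ↦ ?_⟩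
  · exact (Function.forall_update_iff F fun _ K ↦ K ≤ G).2
      ⟨sup_le (hH.trans (hF.le i)) ((edge_le_iff _).2 (.inr hG)), fun j _ ↦ hF.le j⟩
  · exact (Function.forall_update_iff F fun _ K ↦ K.IsAcyclic).2
      ⟨((hF.isAcyclic i).anti hH).sup_edge_of_not_reachable hr, fun j _ ↦ hF.isAcyclic j⟩
  · obtain rfl | hj := eq_or_ne j i
    · simpa [Function.onFun, hjk.symm] using hdisj k hjk
    · obtain rfl | hk := eq_or_ne k i
      · simpa [Function.onFun, hj] using (hdisj j hjk.symm).symm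
      · simpa [Function.onFun, hj, hk] using hF.disjoint hjk

lemma sum_ncard_edgeSet_update_sup_edge [Finite V] [Fintype ι] [DecidableEq ι]
    (F : ι → SimpleGraph V) (i : ι) {H : SimpleGraph V} (hne : x ≠ y) (hxy : ¬ H.Adj x y) :
    ∑ j, (Function.update F i (H ⊔ edge x y) j).edgeSet.ncard + (F i).edgeSet.ncard =
      ∑ j, (F j).edgeSet.ncard + (H.edgeSet.ncard + 1) := by
  have hnew : (H ⊔ edge x y).edgeSet.ncard = H.edgeSet.ncard + 1 := by
    rw [edgeSet_sup, edgeSet_edge_of_ne hne, Set.union_singleton]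
    exact Set.ncard_insert_of_notMem hxy (Set.toFinite _)
  have hrest : ∑ j ∈ Finset.univ.erase i, (Function.update F i (H ⊔ edge x y) j).edgeSet.ncard =
      ∑ j ∈ Finset.univ.erase i, (F j).edgeSet.ncard :=
    Finset.sum_congr rfl fun j hj ↦ by rw [Function.update_of_ne (Finset.ne_of_mem_erase hj)]
  rw [← Finset.sum_erase_add _ _ (Finset.mem_univ i),
    ← Finset.sum_erase_add _ _ (Finset.mem_univ i), hrest, Function.update_self, hnew]
  omega

lemma IsMaxForestPacking.reachable [Finite V] [Fintype ι] (hF : IsMaxForestPacking G F)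
    (hxy : (uncoveredGraph G F).Adj x y) (i : ι) : (F i).Reachable x y := by
  classical
  by_contra hr
  have hsize := sum_ncard_edgeSet_update_sup_edge F i hxy.ne ((uncoveredGraph_adj.1 hxy).2 i)
  have hmax := hF.sum_le _ (hF.update hxy le_rfl hr)
  omega

variable [DecidableEq ι]

/-- `F'` arises from `F` by adding an uncovered edge `s(x, y)` to some `F i` and removing an edge
`s(a, b)` of the cycle thereby created. The latter is expressed by `x` and `y` not being joined in
`F i` without `s(a, b)`. -/
inductive EdgeExchange (G : SimpleGraph V) (F : ι → SimpleGraph V) : (ι → SimpleGraph V) → Prop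
  | exchange {i : ι} {x y a b : V} (hxy : (uncoveredGraph G F).Adj x y) (hab : (F i).Adj a b)
      (hr : ¬ ((F i).deleteEdges {s(a, b)}).Reachable x y) :
      EdgeExchange G F (Function.update F i ((F i).deleteEdges {s(a, b)} ⊔ edge x y))

lemma EdgeExchange.isMaxForestPacking [Finite V] [Fintype ι] (h : EdgeExchange G F F')
    (hF : IsMaxForestPacking G F) : IsMaxForestPacking G F' := by
  obtain @⟨i, x, y, a, b, hxy, hab, hr⟩ := h
  refine ⟨hF.update hxy (deleteEdges_le _) hr, fun F' hF' ↦ (hF.sum_le F' hF').trans_eq ?_⟩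
  have hsize := sum_ncard_edgeSet_update_sup_edge F i hxy.ne fun h ↦ hr h.reachable
  have hdelete : ((F i).deleteEdges {s(a, b)}).edgeSet.ncard + 1 = (F i).edgeSet.ncard := by
    rw [edgeSet_deleteEdges]
    exact Set.ncard_sdiff_singleton_add_one hab (Set.toFinite _)
  omega

lemma uncoveredGraph_adj_of_exchange (hF : IsForestPacking G F)
    (hxy : (uncoveredGraph G F).Adj x y) {i : ι} {a b : V} (hab : (F i).Adj a b) :
    (uncoveredGraph G (Function.update F i ((F i).deleteEdges {s(a, b)} ⊔ edge x y))).Adj a b := by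
  have hne : s(x, y) ≠ s(a, b) := fun h ↦
    (uncoveredGraph_adj.1 hxy).2 i ((mem_edgeSet _).1 (h ▸ (mem_edgeSet _).2 hab))
  refine uncoveredGraph_adj.2 ⟨hF.le i hab,
    (Function.forall_update_iff F fun _ K ↦ ¬ K.Adj a b).2 ⟨?_, fun j hj h ↦ ?_⟩⟩
  · simp [adj_edge, hne]
  · exact disjoint_left.1 (hF.disjoint hj) _ _ h hab

/-- The graph of all edges left uncovered after some sequence of exchanges starting from `F`. Its
components form the partition that certifies the maximality of `F`. -/
def exchangeGraph (G : SimpleGraph V) (F : ι → SimpleGraph V) : SimpleGraph V :=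
  ⨆ F' : {F' : ι → SimpleGraph V // Relation.ReflTransGen (EdgeExchange G) F F'},
    uncoveredGraph G F'.1

lemma exchangeGraph_adj : (exchangeGraph G F).Adj x y ↔
    ∃ F', Relation.ReflTransGen (EdgeExchange G) F F' ∧ (uncoveredGraph G F').Adj x y := by
  simp [exchangeGraph]

lemma EdgeExchange.exchangeGraph_le (h : EdgeExchange G F F') :
    exchangeGraph G F' ≤ exchangeGraph G F := by
  intro x y hxy
  obtain ⟨F'', h', hxy⟩ := exchangeGraph_adj.1 hxy
  exact exchangeGraph_adj.2 ⟨F'', .head h h', hxy⟩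

variable [Finite V] [Fintype ι]

namespace IsMaxForestPacking

lemma reachable_inf_exchangeGraph_of_uncoveredGraph_adj (hF : IsMaxForestPacking G F)
    (hxy : (uncoveredGraph G F).Adj x y) (i : ι) : (F i ⊓ exchangeGraph G F).Reachable x y := by
  obtain ⟨p, hp⟩ := (hF.reachable hxy i).exists_isPath
  refine ⟨p.transfer _ fun e he ↦ ?_⟩
  induction e with | h a b
  have hab : (F i).Adj a b := p.adj_of_mem_edges he
  have hr := not_reachable_deleteEdges_of_mem_edges (hF.isAcyclic i) hp he
  exact ⟨hab, exchangeGraph_adj.2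
    ⟨_, .single (.exchange hxy hab hr),
      uncoveredGraph_adj_of_exchange hF.toIsForestPacking hxy hab⟩⟩

lemma reachable_inf_exchangeGraph_of_edgeExchange (hF : IsMaxForestPacking G F)
    (h : EdgeExchange G F F') (i : ι) (h' : (F' i ⊓ exchangeGraph G F).Reachable x y) :
    (F i ⊓ exchangeGraph G F).Reachable x y := by
  refine reachableSetoid_le (r := (F i ⊓ exchangeGraph G F).reachableSetoid)
    (fun u v hadj ↦ ?_) h'
  obtain ⟨huv, hexchange⟩ := hadj
  obtain @⟨j, c, d, a, b, hcd, -, -⟩ := h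
  obtain rfl | hij := eq_or_ne i j
  · rw [Function.update_self] at huv
    obtain hold | hnew := huv
    · exact Adj.reachable ⟨deleteEdges_le _ hold, hexchange⟩
    · have hr := hF.reachable_inf_exchangeGraph_of_uncoveredGraph_adj hcd i
      obtain ⟨⟨rfl, rfl⟩ | ⟨rfl, rfl⟩, -⟩ := (edge_adj ..).1 hnew
      exacts [hr, hr.symm]
  · rw [Function.update_of_ne hij] at huv
    exact Adj.reachable ⟨huv, hexchange⟩

lemma reachable_inf_exchangeGraph_iff (hF : IsMaxForestPacking G F) (i : ι) :
    (F i ⊓ exchangeGraph G F).Reachable x y ↔ (exchangeGraph G F).Reachable x y := by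
  refine ⟨fun h ↦ h.mono inf_le_right, fun h ↦ ?_⟩
  refine reachableSetoid_le (r := (F i ⊓ exchangeGraph G F).reachableSetoid) (fun u v hadj ↦ ?_) h
  obtain ⟨F', hFF', huv⟩ := exchangeGraph_adj.1 hadj
  change (F i ⊓ exchangeGraph G F).Reachable u v
  clear h hadj
  induction hFF' using Relation.ReflTransGen.head_induction_on with
  | refl => exact hF.reachable_inf_exchangeGraph_of_uncoveredGraph_adj huv i
  | head hstep _ ih =>
    have hr := ih (hstep.isMaxForestPacking hF)
    exact hF.reachable_inf_exchangeGraph_of_edgeExchange hstep i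
      (hr.mono (inf_le_inf_left _ hstep.exchangeGraph_le))

end IsMaxForestPacking

end Packing

lemma IsMaxForestPacking.exists_finpartition [Fintype V] [DecidableEq V] [Fintype ι]
    {G : SimpleGraph V} {F : ι → SimpleGraph V} (hF : IsMaxForestPacking G F) :
    ∃ P : Finpartition (Finset.univ : Finset V),
      (crossingGraph G P).edgeSet.ncard + ∑ i, Nat.card (F i).ConnectedComponent ≤
        Fintype.card ι * P.parts.card := by
  classical
  let U := exchangeGraph G F
  let P := Finpartition.ofSetoid U.reachableSetoid
  have hP (u v : V) : P.part u = P.part v ↔ U.Reachable u v := by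
    rw [← P.mem_part_iff_part_eq_part (Finset.mem_univ u) (Finset.mem_univ v), reachable_comm]
    exact Finpartition.mem_part_ofSetoid_iff_rel
  have hcover : (crossingGraph G P).edgeSet ⊆ ⋃ i, (crossingGraph (F i) P).edgeSet := by
    rw [← edgeSet_iSup]
    refine edgeSet_mono fun u v huv ↦ iSup_adj.2 ?_
    obtain ⟨hG, hne⟩ := crossingGraph_adj.1 huv
    by_contra! h
    have huncovered : (uncoveredGraph G F).Adj u v :=
      uncoveredGraph_adj.2 ⟨hG, fun i hi ↦ h i (crossingGraph_adj.2 ⟨hi, hne⟩)⟩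
    exact hne ((hP u v).2 (exchangeGraph_adj.2 ⟨F, .refl, huncovered⟩).reachable)
  refine ⟨P, ?_⟩
  calc (crossingGraph G P).edgeSet.ncard + ∑ i, Nat.card (F i).ConnectedComponent
      ≤ ∑ i, (crossingGraph (F i) P).edgeSet.ncard + ∑ i, Nat.card (F i).ConnectedComponent :=
        Nat.add_le_add_right ((Set.ncard_le_ncard hcover (Set.toFinite _)).trans
          (Set.ncard_iUnion_le_of_fintype _)) _
    _ = ∑ i, ((crossingGraph (F i) P).edgeSet.ncard + Nat.card (F i).ConnectedComponent) :=
        Finset.sum_add_distrib.symm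
    _ ≤ ∑ _i : ι, P.parts.card := Finset.sum_le_sum fun i _ ↦
        ncard_edgeSet_crossingGraph_add_card_connectedComponent_le (hF.isAcyclic i)
          (inf_le_left (b := U)) fun u v ↦
            (hP u v).trans (hF.reachable_inf_exchangeGraph_iff i).symm
    _ = Fintype.card ι * P.parts.card := by simp

lemma IsForestPacking.isTree_of_sum_card_connectedComponent_le [Finite V] [Nonempty V] [Fintype ι]
    {G : SimpleGraph V} {F : ι → SimpleGraph V} (hF : IsForestPacking G F)
    (h : ∑ i, Nat.card (F i).ConnectedComponent ≤ Fintype.card ι) (i : ι) : (F i).IsTree := by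
  have hpos : ∀ j ∈ Finset.univ, 1 ≤ Nat.card (F j).ConnectedComponent := fun _ _ ↦ Nat.card_pos
  have hsum : ∑ _j : ι, 1 = ∑ j, Nat.card (F j).ConnectedComponent :=
    (Finset.sum_le_sum hpos).antisymm (by simpa using h)
  exact isTree_of_card_connectedComponent_le_one (hF.isAcyclic i)
    ((Finset.sum_eq_sum_iff_of_le hpos).1 hsum i (Finset.mem_univ i)).ge

end

theorem nash_williams_tutte
    {V : Type*} [Fintype V] [DecidableEq V] [Nonempty V]
    (G : SimpleGraph V) (M : ℕ) :
    (∃ T : Fin M → SimpleGraph V, (∀ i, T i ≤ G) ∧ (∀ i, (T i).IsTree) ∧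
        Pairwise fun i j => Disjoint (T i).edgeSet (T j).edgeSet) ↔
      ∀ P : Finpartition (Finset.univ : Finset V), 2 ≤ P.parts.card →
        M * (P.parts.card - 1) ≤
          {e | e ∈ G.edgeSet ∧ ¬∃ p ∈ P.parts, ∀ v ∈ e, v ∈ p}.ncard := by
  simp only [← edgeSet_crossingGraph, disjoint_edgeSet]
  constructor
  · rintro ⟨T, hle, hT, hdisj⟩ P -
    have hweak := card_mul_card_parts_le hle hdisj P
    simp only [card_connectedComponent_eq_one (hT _).connected, Finset.sum_const, Finset.card_univ,
      Fintype.card_fin, smul_eq_mul, mul_one] at hweak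
    rw [Nat.mul_sub_one]
    omega
  · intro h
    obtain ⟨F, hF⟩ := exists_isMaxForestPacking (ι := Fin M) G
    obtain ⟨P, hP⟩ := hF.exists_finpartition
    have hcross : M * P.parts.card ≤ (crossingGraph G P).edgeSet.ncard + M := by
      obtain h2 | h2 := le_or_gt 2 P.parts.card
      · have := h P h2
        rw [Nat.mul_sub_one] at this
        omega
      · nlinarith
    rw [Fintype.card_fin] at hP
    have hsum : ∑ i, Nat.card (F i).ConnectedComponent ≤ Fintype.card (Fin M) := by
      rw [Fintype.card_fin]
      omega
    exact ⟨F, hF.le, hF.isTree_of_sum_card_connectedComponent_le hsum, hF.disjoint⟩
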